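/- For every natural number n, let r_3(s) denote the number of pairs (x, y) ∈ ℤ × ℤ with x² + 3y² = s. Then 4 divides r_3(24n + 7), and the number of 8-regular partitions b_8(n) is congruent to r_3(24n + 7)/4 modulo 2. -/

import Mathlib

/-- The number of `m`-regular partitions of `n`, i.e. partitions of `n`
in which no part is divisible by `m`. -/
noncomputable def numRegularPartitions (m n : ℕ) : ℕ :=
  Nat.card {π : n.Partition // ∀ j ∈ π.parts, ¬ m ∣ j}

/-- The number of representations of `s` as `x² + 3y²` with `x, y ∈ ℤ`. -/
noncomputable def r3 (s : ℕ) : ℕ :=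
  Nat.card {p : ℤ × ℤ // p.1 ^ 2 + 3 * p.2 ^ 2 = s}

open PowerSeries Set

/-!
In characteristic `2` let `f₁ = ∏ (1 - Xⁿ)` and write `S c` for `∑ Xⁿ` over the `n` such that
`c n + 1` is a square. The generating function `∑ b₈(n) Xⁿ = ∏ (1 - X⁸ⁿ) / f₁` is `f₁⁷`, and Euler's
pentagonal number theorem gives `f₁ = S 24`; since squares prime to `6` are `1` modulo `24`,
Frobenius gives `f₁⁴ = S 6`.

The key identity is `f₁ * S 8 = S 6`. Multiplication of `x + y √-3` by `1 - √-3`, of norm `4`,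
matches the solutions of `x² + 3y² = 6n + 1` with `x > 0` to the solutions of
`a² + 3b² = 4(6n + 1)` in odd natural numbers, which are counted by `f₁ * S 8`; the involution
`y ↦ -y` then leaves, modulo `2`, only the solution with `y = 0`, if there is one.

Cancelling `f₁` from `f₁⁸ = S 6 * f₁ * S 8` yields `∑ b₈(n) Xⁿ = S 6 * S 8`, whose `n`-th
coefficient counts the natural solutions of `(2u)² + 3v² = 24n + 7`, that is, all integral
solutions of `x² + 3y² = 24n + 7` up to the signs of `x` and `y`.
-/

section RegularPartitions

theorem numRegularPartitions_eq_card_countRestricted {m : ℕ} (hm : 0 < m) (n : ℕ) :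
    numRegularPartitions m n = (Nat.Partition.countRestricted n m).card := by
  rw [← Nat.Partition.card_restricted_eq_card_countRestricted n hm, numRegularPartitions,
    Nat.card_eq_fintype_card, Fintype.card_subtype]
  rfl

variable {R : Type*} [CommRing R] (p : ℕ) [ExpChar R p]

theorem geom_sum_eq_one_sub_pow_expChar_pow_sub_one (k : ℕ) {y : R}
    (hy : IsRightRegular (1 - y)) :
    ∑ j ∈ Finset.range (p ^ k), y ^ j = (1 - y) ^ (p ^ k - 1) := by
  refine hy ?_
  calc (∑ j ∈ Finset.range (p ^ k), y ^ j) * (1 - y) = 1 - y ^ p ^ k := geom_sum_mul_neg y _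
    _ = (1 - y) ^ p ^ k := by rw [sub_pow_expChar_pow, one_pow]
    _ = (1 - y) ^ (p ^ k - 1) * (1 - y) := (pow_sub_one_mul (expChar_pow_pos R p k).ne' _).symm

open scoped PowerSeries.WithPiTopology in
theorem mk_numRegularPartitions_eq_pentagonalSeries_pow (k : ℕ) :
    (mk fun n ↦ (numRegularPartitions (p ^ k) n : R)) = pentagonalSeries R ^ (p ^ k - 1) := by
  let _ : TopologicalSpace R := ⊥
  have _ : DiscreteTopology R := ⟨rfl⟩
  have : ExpChar R⟦X⟧ p := expChar_of_injective_ringHom (C_injective (R := R)) p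
  have hq : 0 < p ^ k := expChar_pow_pos R p k
  have regular (i : ℕ) : IsRightRegular (1 - X ^ (i + 1) : R⟦X⟧) :=
    (isUnit_iff_constantCoeff.2 (by simp)).isRegular.right
  have product := (WithPiTopology.hasProd_one_sub_X_pow R).map
    (powMonoidHom (p ^ k - 1) : R⟦X⟧ →* R⟦X⟧) (continuous_pow _)
  simp_rw [numRegularPartitions_eq_card_countRestricted hq]
  refine (Nat.Partition.hasProd_powerSeriesMk_card_countRestricted R hq).unique ?_
  simpa only [Function.comp_def, powMonoidHom_apply, pow_mul,
    geom_sum_eq_one_sub_pow_expChar_pow_sub_one p k (regular _)] using product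

end RegularPartitions

section SquareSeries

/-- The power series `∑ Xⁿ` over those `n` for which `c * n + 1` is a perfect square. The exponents
are the generalized pentagonal numbers for `c = 24` and the triangular numbers for `c = 8`. -/
def squareSeries (R : Type*) [Semiring R] (c : ℕ) : R⟦X⟧ :=
  mk fun n ↦ if IsSquare (c * n + 1) then 1 else 0

theorem coeff_squareSeries (R : Type*) [Semiring R] (c n : ℕ) :
    coeff n (squareSeries R c) = if IsSquare (c * n + 1) then 1 else 0 :=
  coeff_mk _ _

theorem coeff_squareSeries_mul_squareSeries (R : Type*) [Semiring R] {c d : ℕ} (hc : 0 < c)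
    (hd : 0 < d) (n : ℕ) :
    coeff n (squareSeries R c * squareSeries R d) =
      ({p : ℕ × ℕ | ∃ a b, p.1 ^ 2 = c * a + 1 ∧ p.2 ^ 2 = d * b + 1 ∧ a + b = n}.ncard : R) := by
  let s := (Finset.HasAntidiagonal.antidiagonal n).filter fun p ↦
    IsSquare (c * p.1 + 1) ∧ IsSquare (d * p.2 + 1)
  have coeff_eq : coeff n (squareSeries R c * squareSeries R d) = (s.card : R) := by
    simp_rw [coeff_mul, coeff_squareSeries, s, Finset.card_filter, Nat.cast_sum,
      ite_zero_mul_ite_zero, Nat.cast_ite, Nat.cast_one, Nat.cast_zero, mul_one]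
  rw [coeff_eq, ← ncard_coe_finset]
  congr 1
  refine BijOn.ncard_eq (f := fun p ↦ ((c * p.1 + 1).sqrt, (d * p.2 + 1).sqrt)) ⟨?_, ?_, ?_⟩
  · rintro ⟨a, b⟩ h
    simp only [s, Finset.coe_filter, Finset.HasAntidiagonal.mem_antidiagonal, mem_ofPred_eq] at h
    obtain ⟨hn, ⟨u, hu⟩, ⟨v, hv⟩⟩ := h
    exact ⟨a, b, by simp [hu, sq], by simp [hv, sq], hn⟩
  · rintro ⟨a, b⟩ h ⟨a', b'⟩ h' heq
    simp only [s, Finset.coe_filter, Finset.HasAntidiagonal.mem_antidiagonal, mem_ofPred_eq] at h h'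
    obtain ⟨-, ⟨u, hu⟩, ⟨v, hv⟩⟩ := h
    obtain ⟨-, ⟨u', hu'⟩, ⟨v', hv'⟩⟩ := h'
    simp only [hu, hv, hu', hv', Nat.sqrt_eq, Prod.mk.injEq] at heq
    obtain ⟨rfl, rfl⟩ := heq
    have ha : c * a = c * a' := by omega
    have hb : d * b = d * b' := by omega
    rw [Nat.eq_of_mul_eq_mul_left hc ha, Nat.eq_of_mul_eq_mul_left hd hb]
  · rintro ⟨u, v⟩ ⟨a, b, hu, hv, hn⟩
    refine ⟨(a, b), ?_, by simp [← hu, ← hv]⟩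
    simp only [s, Finset.coe_filter, Finset.HasAntidiagonal.mem_antidiagonal, mem_ofPred_eq, ← hu,
      ← hv]
    exact ⟨hn, IsSquare.sq u, IsSquare.sq v⟩

theorem expand_squareSeries (R : Type*) [CommRing R] {c k : ℕ} (hk : k ≠ 0)
    (h : ∀ n, IsSquare (c * n + 1) → k ∣ n) :
    (squareSeries R (c * k)).expand k hk = squareSeries R c := by
  ext n
  rw [coeff_expand, coeff_squareSeries, coeff_squareSeries]
  by_cases hn : k ∣ n
  · rw [if_pos hn, mul_assoc, Nat.mul_div_cancel' hn]
  · rw [if_neg hn, if_neg (mt (h n) hn)]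

theorem map_squareSeries {R S : Type*} [Semiring R] [Semiring S] (φ : R →+* S) (c : ℕ) :
    (squareSeries R c).map φ = squareSeries S c := by
  ext n
  simp [coeff_squareSeries, apply_ite φ]

theorem squareSeries_mul_pow_expChar_pow (R : Type*) [CommRing R] (p : ℕ) [ExpChar R p] {c k : ℕ}
    (h : ∀ n, IsSquare (c * n + 1) → p ^ k ∣ n) :
    squareSeries R (c * p ^ k) ^ p ^ k = squareSeries R c := by
  have hp : p ≠ 0 := expChar_ne_zero R p
  calc squareSeries R (c * p ^ k) ^ p ^ k
      = ((squareSeries R (c * p ^ k)).expand (p ^ k) (pow_ne_zero k hp)).map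
          (iterateFrobenius R p k) :=
        (MvPowerSeries.map_iterateFrobenius_expand p hp (squareSeries R (c * p ^ k)) k).symm
    _ = squareSeries R c := by rw [expand_squareSeries R _ h, map_squareSeries]

theorem mem_range_pentagonal_iff {a : ℕ} : a ∈ range pentagonal ↔ IsSquare (24 * a + 1) := by
  rw [← Int.isSquare_natCast_iff]
  push_cast
  constructor
  · rintro ⟨k, rfl⟩
    exact ⟨6 * k - 1, by linear_combination 12 * two_mul_natCast_pentagonal k⟩
  · rintro ⟨u, hu⟩
    obtain ⟨k, hk⟩ : ∃ k : ℤ, (6 * k - 1) ^ 2 = u ^ 2 := by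
      have hmod : u % 6 = 1 ∨ u % 6 = 5 := by
        have hsq : u * u % 6 = 1 := by omega
        rw [Int.mul_emod] at hsq
        have := Int.emod_nonneg u (by decide : (6 : ℤ) ≠ 0)
        have := Int.emod_lt_of_pos u (by decide : (0 : ℤ) < 6)
        interval_cases u % 6 <;> simp_all
      rcases hmod with h | h
      · exact ⟨-(u / 6), by rw [← neg_sq u]; congr 1; omega⟩
      · exact ⟨u / 6 + 1, by congr 1; omega⟩
    refine ⟨k, ?_⟩
    zify
    linarith [two_mul_natCast_pentagonal k]

theorem pentagonalSeries_eq_squareSeries (R : Type*) [CommRing R] [CharP R 2] :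
    pentagonalSeries R = squareSeries R 24 := by
  ext n
  rw [coeff_squareSeries]
  split_ifs with h
  · obtain ⟨k, rfl⟩ := mem_range_pentagonal_iff.2 h
    rw [coeff_pentagonalSeries_pentagonal]
    rcases Int.even_or_odd k with hk | hk
    · simp [Int.negOnePow_even k hk]
    · simp [Int.negOnePow_odd k hk, CharTwo.neg_eq]
  · exact coeff_pentagonalSeries_eq_zero R (mt mem_range_pentagonal_iff.1 h)

end SquareSeries

section Representations

theorem odd_iff_exists_sq_eq_eight_mul_add_one {u : ℕ} : Odd u ↔ ∃ b, u ^ 2 = 8 * b + 1 := by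
  refine ⟨fun hu ↦ ?_, fun ⟨b, hb⟩ ↦ ?_⟩
  · obtain ⟨b, hb⟩ := Nat.eight_dvd_sq_sub_one_of_odd hu
    have := Nat.pow_pos (n := 2) hu.pos
    exact ⟨b, by omega⟩
  · rw [← Nat.odd_pow_iff two_ne_zero, hb]
    exact ⟨4 * b, by ring⟩

theorem four_dvd_of_isSquare_six_mul_add_one {n : ℕ} (h : IsSquare (6 * n + 1)) : 4 ∣ n := by
  obtain ⟨u, hu⟩ := h
  rw [← sq] at hu
  have hodd : Odd (u ^ 2) := hu ▸ ⟨3 * n, by ring⟩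
  obtain ⟨b, hb⟩ := odd_iff_exists_sq_eq_eight_mul_add_one.1 ((Nat.odd_pow_iff two_ne_zero).1 hodd)
  omega

theorem setOf_sq_eq_twentyfour_mul_and_eight_mul (n : ℕ) :
    {p : ℕ × ℕ | ∃ a b, p.1 ^ 2 = 24 * a + 1 ∧ p.2 ^ 2 = 8 * b + 1 ∧ a + b = n} =
      {p | Odd p.1 ∧ p.1 ^ 2 + 3 * p.2 ^ 2 = 4 * (6 * n + 1)} := by
  ext ⟨u, v⟩
  constructor
  · rintro ⟨a, b, hu, hv, rfl⟩
    simp only [mem_ofPred_eq] at *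
    exact ⟨odd_iff_exists_sq_eq_eight_mul_add_one.2 ⟨3 * a, by omega⟩, by omega⟩
  · rintro ⟨hu, h⟩
    dsimp only at hu h
    obtain ⟨a, ha⟩ := odd_iff_exists_sq_eq_eight_mul_add_one.1 hu
    have hv : Odd (v ^ 2) := Nat.odd_iff.2 (by omega)
    obtain ⟨b, hb⟩ := odd_iff_exists_sq_eq_eight_mul_add_one.1 ((Nat.odd_pow_iff two_ne_zero).1 hv)
    exact ⟨a / 3, b, by dsimp only; omega, hb, by omega⟩

theorem setOf_sq_eq_six_mul_and_eight_mul (n : ℕ) :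
    {p : ℕ × ℕ | ∃ a b, p.1 ^ 2 = 6 * a + 1 ∧ p.2 ^ 2 = 8 * b + 1 ∧ a + b = n} =
      {p | 4 * p.1 ^ 2 + 3 * p.2 ^ 2 = 24 * n + 7} := by
  ext ⟨u, v⟩
  constructor
  · rintro ⟨a, b, hu, hv, rfl⟩
    simp only [mem_ofPred_eq] at *
    omega
  · intro h
    simp only [mem_ofPred_eq] at h
    have hv : Odd (v ^ 2) := Nat.odd_iff.2 (by omega)
    obtain ⟨b, hb⟩ := odd_iff_exists_sq_eq_eight_mul_add_one.1 ((Nat.odd_pow_iff two_ne_zero).1 hv)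
    exact ⟨n - b, b, by dsimp only; omega, hb, by omega⟩

theorem ncard_modEq_ncard_fixedPoints {α : Type*} {s : Set α} (hs : s.Finite)
    {σ : α → α} (maps : MapsTo σ s s) (invol : LeftInvOn σ σ s) :
    s.ncard ≡ {x ∈ s | σ x = x}.ncard [MOD 2] := by
  classical
  have := hs.fintype
  let f : Function.End s := maps.restrict σ s s
  have hf : f ^ 2 ^ 1 = 1 := funext fun x ↦ Subtype.ext (invol x.2)
  have fixedPoints_image : Subtype.val '' f.fixedPoints = {x ∈ s | σ x = x} := by
    ext x
    simp [f, Function.mem_fixedPoints, Function.IsFixedPt, Subtype.ext_iff, and_comm]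
  rw [← fixedPoints_image, ncard_image_of_injective _ Subtype.val_injective,
    ← Nat.card_coe_set_eq, ← Nat.card_coe_set_eq, Nat.card_eq_fintype_card,
    Nat.card_eq_fintype_card]
  exact Equiv.Perm.card_fixedPoints_modEq hf

theorem finite_setOf_sq_add_mul_sq_eq {d : ℤ} (hd : 0 < d) (m : ℤ) :
    {p : ℤ × ℤ | p.1 ^ 2 + d * p.2 ^ 2 = m}.Finite := by
  refine ((finite_Icc (-m) m).prod (finite_Icc (-m) m)).subset ?_
  rintro ⟨x, y⟩ h
  simp only [mem_ofPred_eq] at h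
  have hx : |x| ≤ x ^ 2 := sq_abs x ▸ Int.le_self_sq |x|
  have hy : |y| ≤ y ^ 2 := sq_abs y ▸ Int.le_self_sq |y|
  have hdy : y ^ 2 ≤ d * y ^ 2 := le_mul_of_one_le_left (sq_nonneg y) hd
  exact ⟨abs_le.1 (by linarith [sq_nonneg y]), abs_le.1 (by linarith [sq_nonneg x])⟩

theorem ncard_pos_sq_eq {m : ℕ} (hm : 0 < m) :
    {p : ℤ × ℤ | (0 < p.1 ∧ p.1 ^ 2 = m) ∧ p.2 = 0}.ncard = if IsSquare m then 1 else 0 := by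
  split_ifs with h
  · obtain ⟨u, rfl⟩ := h
    have hu : (0 : ℤ) < u := by exact_mod_cast Nat.pos_of_mul_pos_left hm
    refine ncard_eq_one.2 ⟨(u, 0), ?_⟩
    ext ⟨x, y⟩
    simp only [mem_ofPred_eq, mem_singleton_iff, Prod.mk.injEq, ← sq]
    refine and_congr_left fun _ ↦ ⟨fun ⟨hx, hxu⟩ ↦ ?_, fun hx ↦ hx ▸ ⟨hu, rfl⟩⟩
    exact (pow_left_inj₀ hx.le hu.le two_ne_zero).1 hxu
  · convert ncard_empty (ℤ × ℤ)
    refine eq_empty_of_forall_notMem ?_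
    rintro ⟨x, y⟩ ⟨⟨-, hx⟩, -⟩
    exact h (Int.isSquare_natCast_iff.1 (hx ▸ IsSquare.sq x))

theorem ncard_pos_sq_add_mul_sq_modEq {d : ℤ} (hd : 0 < d) {m : ℕ} (hm : 0 < m) :
    {p : ℤ × ℤ | 0 < p.1 ∧ p.1 ^ 2 + d * p.2 ^ 2 = m}.ncard ≡
      if IsSquare m then 1 else 0 [MOD 2] := by
  have finite : {p : ℤ × ℤ | 0 < p.1 ∧ p.1 ^ 2 + d * p.2 ^ 2 = m}.Finite :=
    (finite_setOf_sq_add_mul_sq_eq hd m).subset fun p hp ↦ hp.2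
  have fixed : {p ∈ {p : ℤ × ℤ | 0 < p.1 ∧ p.1 ^ 2 + d * p.2 ^ 2 = m} | (p.1, -p.2) = p} =
      {p : ℤ × ℤ | (0 < p.1 ∧ p.1 ^ 2 = m) ∧ p.2 = 0} := by
    ext ⟨x, y⟩
    simp only [mem_ofPred_eq, Prod.mk.injEq, true_and, neg_eq_self]
    refine and_congr_left ?_
    rintro rfl
    simp
  rw [← ncard_pos_sq_eq hm, ← fixed]
  exact ncard_modEq_ncard_fixedPoints finite (σ := fun p ↦ (p.1, -p.2))
    (fun p hp ↦ by simpa using hp) fun p _ ↦ by simp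

theorem eq_and_eq_of_mul_units_eq {a b : ℕ} {ε δ : ℤˣ} (ha : a ≠ 0)
    (h : (a * ε : ℤ) = b * δ) : a = b ∧ ε = δ := by
  obtain rfl : a = b := by simpa [Int.natAbs_mul] using congrArg Int.natAbs h
  exact ⟨rfl, Units.ext (mul_left_cancel₀ (Nat.cast_ne_zero.2 ha) h)⟩

theorem ncard_preimage_natAbs (s : Set (ℕ × ℕ)) (hs : ∀ p ∈ s, p.1 ≠ 0 ∧ p.2 ≠ 0) :
    {p : ℤ × ℤ | (p.1.natAbs, p.2.natAbs) ∈ s}.ncard = 4 * s.ncard := by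
  have bij : BijOn (fun q : (ℤˣ × ℤˣ) × (ℕ × ℕ) ↦ ((q.2.1 * q.1.1 : ℤ), (q.2.2 * q.1.2 : ℤ)))
      (univ ×ˢ s) {p : ℤ × ℤ | (p.1.natAbs, p.2.natAbs) ∈ s} := by
    refine ⟨?_, ?_, ?_⟩
    · rintro ⟨⟨ε, δ⟩, a, b⟩ ⟨-, h⟩
      simpa [Int.natAbs_mul] using h
    · rintro ⟨⟨ε, δ⟩, a, b⟩ ⟨-, h⟩ ⟨⟨ε', δ'⟩, a', b'⟩ - heq
      simp only [Prod.mk.injEq] at heq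
      obtain ⟨hx, hy⟩ := heq
      obtain ⟨rfl, rfl⟩ := eq_and_eq_of_mul_units_eq (hs _ h).1 hx
      obtain ⟨rfl, rfl⟩ := eq_and_eq_of_mul_units_eq (hs _ h).2 hy
      rfl
    · rintro ⟨x, y⟩ h
      obtain ⟨ε, hx⟩ := (Int.associated_natAbs x).symm
      obtain ⟨δ, hy⟩ := (Int.associated_natAbs y).symm
      exact ⟨((ε, δ), (x.natAbs, y.natAbs)), ⟨mem_univ _, h⟩, Prod.ext hx hy⟩
  rw [← bij.ncard_eq, ncard_prod, ncard_univ, Nat.card_prod]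
  simp

theorem image_two_mul_setOf_four_mul_sq_add_three_mul_sq_eq {s : ℕ} (hs : s % 4 = 3) :
    (fun p : ℕ × ℕ ↦ (2 * p.1, p.2)) '' {p | 4 * p.1 ^ 2 + 3 * p.2 ^ 2 = s} =
      {p | p.1 ^ 2 + 3 * p.2 ^ 2 = s} := by
  ext ⟨u, v⟩
  simp only [mem_image, mem_ofPred_eq, Prod.exists, Prod.mk.injEq]
  constructor
  · rintro ⟨u, v, h, rfl, rfl⟩
    linarith
  · intro h
    have hu : Even u := by
      by_contra hu
      obtain ⟨a, ha⟩ := odd_iff_exists_sq_eq_eight_mul_add_one.1 (Nat.not_even_iff_odd.1 hu)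
      have hv : Even (v ^ 2) := Nat.even_iff.2 (by omega)
      obtain ⟨w, rfl⟩ := ((Nat.even_pow' two_ne_zero).1 hv).two_dvd
      ring_nf at h
      omega
    obtain ⟨w, rfl⟩ := hu.two_dvd
    exact ⟨w, v, by linarith, rfl, rfl⟩

theorem r3_eq_four_mul_ncard {s : ℕ} (h4 : s % 4 = 3) (h3 : ¬ 3 ∣ s) :
    r3 s = 4 * {p : ℕ × ℕ | 4 * p.1 ^ 2 + 3 * p.2 ^ 2 = s}.ncard := by
  have double_injective : Function.Injective fun p : ℕ × ℕ ↦ (2 * p.1, p.2) := by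
    rintro ⟨u, v⟩ ⟨u', v'⟩ h
    simpa using h
  rw [← ncard_image_of_injective _ double_injective, ← ncard_preimage_natAbs]
  · rw [image_two_mul_setOf_four_mul_sq_add_three_mul_sq_eq h4, r3, ← Nat.card_coe_set_eq]
    congr! 3 with p
    zify
    simp
  · rintro _ ⟨⟨u, v⟩, h, rfl⟩
    simp only [mem_ofPred_eq] at h
    refine ⟨?_, ?_⟩
    · rintro hu
      obtain rfl : u = 0 := by simpa using hu
      exact h3 ⟨v ^ 2, by linarith⟩
    · rintro rfl
      omega

theorem odd_add_of_odd_sq_add_three_mul_sq {x y : ℤ} (h : Odd (x ^ 2 + 3 * y ^ 2)) :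
    Odd (x + y) := by
  have h3 : ¬ Even (3 : ℤ) := by decide
  simpa [Int.odd_add, Int.even_mul, Int.even_pow, Int.odd_pow, h3] using h

theorem exists_natAbs_eq_and_four_dvd_sub {a b : ℕ} (ha : Odd a) (hb : Odd b) :
    ∃ c : ℤ, c.natAbs = b ∧ 4 ∣ a - c := by
  rw [Nat.odd_iff] at ha hb
  by_cases h : a % 4 = b % 4
  · exact ⟨b, by omega, by omega⟩
  · exact ⟨-b, by omega, by omega⟩

theorem bijOn_natAbs_add_three_mul_sub {m : ℕ} (hm : Odd m) (h3 : ¬ 3 ∣ m) :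
    BijOn (fun p : ℤ × ℤ ↦ ((p.1 + 3 * p.2).natAbs, (p.1 - p.2).natAbs))
      {p | 0 < p.1 ∧ p.1 ^ 2 + 3 * p.2 ^ 2 = m}
      {p | Odd p.1 ∧ p.1 ^ 2 + 3 * p.2 ^ 2 = 4 * m} := by
  have odd_add {x y : ℤ} (h : x ^ 2 + 3 * y ^ 2 = m) : (x + y) % 2 = 1 :=
    Int.odd_iff.1 (odd_add_of_odd_sq_add_three_mul_sq (h ▸ hm.natCast))
  refine ⟨?_, ?_, ?_⟩
  · rintro ⟨x, y⟩ ⟨-, h⟩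
    have := odd_add h
    refine ⟨Int.natAbs_odd.2 (Int.odd_iff.2 (by dsimp only; omega)), ?_⟩
    zify
    simp only [sq_abs]
    linear_combination 4 * h
  · rintro ⟨x, y⟩ ⟨hx, h⟩ ⟨x', y'⟩ ⟨hx', h'⟩ heq
    have := odd_add h
    have := odd_add h'
    simp only [Prod.mk.injEq] at heq hx hx' ⊢
    omega
  · rintro ⟨a, b⟩ ⟨ha, h⟩
    simp only at ha h
    have hb : Odd b := by
      obtain ⟨k, hk⟩ := odd_iff_exists_sq_eq_eight_mul_add_one.1 ha
      exact (Nat.odd_pow_iff two_ne_zero).1 (Nat.odd_iff.2 (by omega : b ^ 2 % 2 = 1))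
    obtain ⟨c, hc, y, hy⟩ := exists_natAbs_eq_and_four_dvd_sub ha hb
    have hxy : (c + y) ^ 2 + 3 * y ^ 2 = m := by
      rw [← hc] at h
      zify at h
      rw [sq_abs, eq_add_of_sub_eq hy] at h
      linarith
    have hx : c + y ≠ 0 := fun hx ↦ h3 (by rw [hx] at hxy; zify; exact ⟨y ^ 2, by linarith⟩)
    rcases hx.lt_or_gt with hneg | hpos
    · refine ⟨(-(c + y), -y), ⟨neg_pos.2 hneg, by simpa only [neg_sq] using hxy⟩, ?_⟩
      simp only [Prod.mk.injEq]
      omega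
    · refine ⟨(c + y, y), ⟨hpos, hxy⟩, ?_⟩
      simp only [Prod.mk.injEq]
      omega

end Representations

theorem squareSeries_twentyfour_mul_squareSeries_eight (R : Type*) [CommRing R] [CharP R 2] :
    squareSeries R 24 * squareSeries R 8 = squareSeries R 6 := by
  ext n
  have bij := bijOn_natAbs_add_three_mul_sub (m := 6 * n + 1) ⟨3 * n, by ring⟩ (by omega)
  rw [coeff_squareSeries_mul_squareSeries R (by norm_num) (by norm_num),
    setOf_sq_eq_twentyfour_mul_and_eight_mul, ← bij.ncard_eq, coeff_squareSeries,
    CharP.natCast_eq_natCast' R 2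
      (ncard_pos_sq_add_mul_sq_modEq (by norm_num) (Nat.succ_pos (6 * n)))]
  simp

theorem mk_numRegularPartitions_eight (R : Type*) [CommRing R] [CharP R 2] :
    (mk fun n ↦ (numRegularPartitions 8 n : R)) = squareSeries R 6 * squareSeries R 8 := by
  have isUnit : IsUnit (squareSeries R 24) := by
    rw [isUnit_iff_constantCoeff, ← coeff_zero_eq_constantCoeff_apply, coeff_squareSeries]
    simp
  have pow_four : squareSeries R 24 ^ 4 = squareSeries R 6 :=
    squareSeries_mul_pow_expChar_pow R 2 (c := 6) (k := 2)
      fun _ ↦ four_dvd_of_isSquare_six_mul_add_one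
  have pow_seven : (mk fun n ↦ (numRegularPartitions 8 n : R)) = squareSeries R 24 ^ 7 := by
    rw [← pentagonalSeries_eq_squareSeries]
    exact mk_numRegularPartitions_eq_pentagonalSeries_pow 2 3
  refine isUnit.mul_left_cancel ?_
  calc squareSeries R 24 * mk (fun n ↦ (numRegularPartitions 8 n : R))
      = squareSeries R 24 ^ 4 * squareSeries R 24 ^ 4 := by rw [pow_seven]; ring
    _ = squareSeries R 6 * (squareSeries R 24 * squareSeries R 8) := by
      rw [squareSeries_twentyfour_mul_squareSeries_eight, pow_four]
    _ = squareSeries R 24 * (squareSeries R 6 * squareSeries R 8) := mul_left_comm _ _ _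

theorem stmt_18 (n : ℕ) :
    4 ∣ r3 (24 * n + 7) ∧
      numRegularPartitions 8 n ≡ r3 (24 * n + 7) / 4 [MOD 2] := by
  have hr3 : r3 (24 * n + 7) = 4 * {p : ℕ × ℕ | 4 * p.1 ^ 2 + 3 * p.2 ^ 2 = 24 * n + 7}.ncard :=
    r3_eq_four_mul_ncard (by omega) (by omega)
  refine ⟨⟨_, hr3⟩, ?_⟩
  rw [hr3, Nat.mul_div_cancel_left _ four_pos, ← ZMod.natCast_eq_natCast_iff,
    ← setOf_sq_eq_six_mul_and_eight_mul,
    ← coeff_squareSeries_mul_squareSeries (ZMod 2) (by norm_num) (by norm_num),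
    ← mk_numRegularPartitions_eight, coeff_mk]
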